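/- For t ∈ (0,1), the interpolating free energy α̃_N(t) is differentiable in t and its derivative is d/dt α̃_N(t) = N⁻¹ E( f_1 f_2 ⋯ f_K · Z̃_N⁻¹ ∂_t Z̃_N ), where Z̃_N⁻¹ ∂_t Z̃_N = (β/(2√(tN))) Σ_{i<j} J_{ij} ω(σ_i σ_j) − (β/(2√(1−t))) Σ_{a=1}^K √(q_a − q_{a−1}) Σ_i J_i^a ω(σ_i), ω being the Gibbs state associated to the interpolating Boltzmann factor at parameter t. -/

import Mathlib

open MeasureTheory ProbabilityTheory Filter

noncomputable section

/-! ## Gaussian disorder -/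

/-- The standard (centered, unit variance) Gaussian measure on `ℝ`. -/
def stdGauss : Measure ℝ := gaussianReal 0 1

instance : IsProbabilityMeasure stdGauss := by unfold stdGauss; infer_instance

/-- `N` i.i.d. standard Gaussian variables. -/
def gaussN (N : ℕ) : Measure (Fin N → ℝ) := Measure.pi fun _ => stdGauss

instance (N : ℕ) : IsProbabilityMeasure (gaussN N) := by unfold gaussN; infer_instance

/-- The i.i.d. standard Gaussian couplings `J_{ij}` (only entries with `i < j` are used). -/
def gaussC (N : ℕ) : Measure (Fin N → Fin N → ℝ) := Measure.pi fun _ => gaussN N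

instance (N : ℕ) : IsProbabilityMeasure (gaussC N) := by unfold gaussC; infer_instance

/-- The i.i.d. standard Gaussian one-body fields `J_i^a`, `a = 1, …, K`
(row `⟨a-1⟩ : Fin K` corresponds to the level `a` of the paper). -/
def gaussS (K N : ℕ) : Measure (Fin K → Fin N → ℝ) := Measure.pi fun _ => gaussN N

instance (K N : ℕ) : IsProbabilityMeasure (gaussS K N) := by unfold gaussS; infer_instance

/-- I.i.d. standard Gaussian couplings indexed by subsets of sites, for the p-spin model
(only the cardinality-`p` subsets are used). -/
def gaussP (N : ℕ) : Measure (Finset (Fin N) → ℝ) := Measure.pi fun _ => stdGauss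

instance (N : ℕ) : IsProbabilityMeasure (gaussP N) := by unfold gaussP; infer_instance

/-! ## Spins and overlaps -/

/-- The spin value (`±1`) of a Boolean configuration entry. -/
def spin (b : Bool) : ℝ := if b then 1 else -1

/-- The overlap `q₁₂ = N⁻¹ ∑ᵢ σᵢ⁽¹⁾ σᵢ⁽²⁾` of two replicas. -/
def overlap (N : ℕ) (σ τ : Fin N → Bool) : ℝ := (N : ℝ)⁻¹ * ∑ i, spin (σ i) * spin (τ i)

/-! ## Piecewise constant functional order parameters and the Parisi function -/

/-- One backward step of the Parisi recursion on an interval of constancy of the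
functional order parameter: from `g = f(q_a, ·)`, with value `m` of the order parameter
and `s = q_a - q`, produce `f(q, ·)`. -/
def pStep (m s : ℝ) (g : ℝ → ℝ) (y : ℝ) : ℝ :=
  if m = 0 then ∫ z, g (y + z * Real.sqrt s) ∂stdGauss
  else m⁻¹ * Real.log (∫ z, Real.exp (m * g (y + z * Real.sqrt s)) ∂stdGauss)

/-- `parisiLevel K q m β j` is the Parisi function `f(q_{K-j}, ·; x, β)` at the node
`q_{K-j}`, obtained by `j` backward steps from the final condition `f(q_K, y) = log cosh (β y)`. -/
def parisiLevel (K : ℕ) (q m : ℕ → ℝ) (β : ℝ) : ℕ → ℝ → ℝ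
  | 0 => fun y => Real.log (Real.cosh (β * y))
  | j + 1 => pStep (m (K - j)) (q (K - j) - q (K - j - 1)) (parisiLevel K q m β j)

/-- The Parisi function `f(r, y; x, β)` for a piecewise constant order parameter `x`
given by nodes `q` and values `m`:  for `q_{a-1} ≤ r ≤ q_a` it is obtained from
`f(q_a, ·)` by one backward step with value `m_a` over a time `q_a - r`. -/
def parisiF (K : ℕ) (q m : ℕ → ℝ) (β : ℝ) (r y : ℝ) : ℝ :=
  pStep (m (sInf {a : ℕ | r ≤ q a})) (q (sInf {a : ℕ | r ≤ q a}) - r)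
    (parisiLevel K q m β (K - sInf {a : ℕ | r ≤ q a})) y

/-- The functional order parameter as a function: `x(r) = m_a` for `q_{a-1} ≤ r < q_a`,
and `x(1) = m_K`. -/
def xFun (K : ℕ) (q m : ℕ → ℝ) (r : ℝ) : ℝ :=
  if 1 ≤ r then m K else m (sInf {a : ℕ | r < q a})

/-- A piecewise constant functional order parameter:
`0 = q_0 ≤ q_1 ≤ … ≤ q_K = 1`, `0 ≤ m_1 ≤ … ≤ m_K ≤ 1`,
with the conventions `m_0 = 0`, `m_{K+1} = 1`. -/
structure OrderParam where
  K : ℕ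
  hK : 1 ≤ K
  q : ℕ → ℝ
  m : ℕ → ℝ
  hq0 : q 0 = 0
  hqK : q K = 1
  hq_mono : ∀ a, a < K → q a ≤ q (a + 1)
  hm0 : m 0 = 0
  hmtop : m (K + 1) = 1
  hm1 : 0 ≤ m 1
  hm_mono : ∀ a, 1 ≤ a → a < K → m a ≤ m (a + 1)
  hmK : m K ≤ 1

/-- Guerra's trial function `ᾱ(β, h; x) = log 2 + f(0, h; x, β) - (β²/2) ∫₀¹ r x(r) dr`. -/
def trialAlpha (K : ℕ) (q m : ℕ → ℝ) (β h : ℝ) : ℝ :=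
  Real.log 2 + parisiLevel K q m β K h - β ^ 2 / 2 * ∫ r in (0 : ℝ)..1, r * xFun K q m r

/-! ## The Sherrington–Kirkpatrick model -/

/-- The SK Hamiltonian `H_N(σ, h, J) = -(1/√N) ∑_{i<j} J_{ij} σ_i σ_j - h ∑_i σ_i`. -/
def hamSK (N : ℕ) (h : ℝ) (Jc : Fin N → Fin N → ℝ) (σ : Fin N → Bool) : ℝ :=
  -(1 / Real.sqrt N) * ∑ i, ∑ j, (if i < j then Jc i j * spin (σ i) * spin (σ j) else 0)
    - h * ∑ i, spin (σ i)

/-- The SK partition function `Z_N(β, h, J)`. -/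
def ZSK (N : ℕ) (β h : ℝ) (Jc : Fin N → Fin N → ℝ) : ℝ :=
  ∑ σ : Fin N → Bool, Real.exp (-(β * hamSK N h Jc σ))

/-- The quenched average `N⁻¹ E log Z_N(β, h, J)`. -/
def quenchedFE (N : ℕ) (β h : ℝ) : ℝ :=
  (N : ℝ)⁻¹ * ∫ Jc, Real.log (ZSK N β h Jc) ∂gaussC N

/-- The ground state energy density `e_N(J, h)`, defined by
`-e_N(J, h) = N⁻¹ min_σ H_N(σ, h, J)`. -/
def eGS (N : ℕ) (h : ℝ) (Jc : Fin N → Fin N → ℝ) : ℝ :=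
  -((N : ℝ)⁻¹ * ⨅ σ : Fin N → Bool, hamSK N h Jc σ)

/-- The quenched ground state energy density `e_N(h) = E(e_N(J, h))`. -/
def eQuenched (N : ℕ) (h : ℝ) : ℝ := ∫ Jc, eGS N h Jc ∂gaussC N

/-! ## The interpolating system -/

/-- The interpolating Boltzmann factor. -/
def bFac (N K : ℕ) (β h t : ℝ) (q : ℕ → ℝ) (Jc : Fin N → Fin N → ℝ)
    (Js : Fin K → Fin N → ℝ) (σ : Fin N → Bool) : ℝ :=
  Real.exp (β * Real.sqrt (t / N) *
        ∑ i, ∑ j, (if i < j then Jc i j * spin (σ i) * spin (σ j) else 0)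
      + β * h * ∑ i, spin (σ i)
      + β * Real.sqrt (1 - t) *
          ∑ a : Fin K, Real.sqrt (q (a.val + 1) - q a.val) * ∑ i, Js a i * spin (σ i))

/-- The interpolating partition function `Z̃_N(β, h; t; x; J)`. -/
def Ztil (N K : ℕ) (β h t : ℝ) (q : ℕ → ℝ) (Jc : Fin N → Fin N → ℝ)
    (Js : Fin K → Fin N → ℝ) : ℝ :=
  ∑ σ : Fin N → Bool, bFac N K β h t q Jc Js σ

/-- `Wrec … j` is the random variable `Z_{K-j}`:  `Z_K = Z̃_N` and
`Z_{a-1} = (E_a (Z_a^{m_a}))^{1/m_a}`, where `E_a` integrates the Gaussian row `J^a`. -/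
def Wrec (N K : ℕ) (β h t : ℝ) (q m : ℕ → ℝ) :
    ℕ → (Fin N → Fin N → ℝ) → (Fin K → Fin N → ℝ) → ℝ
  | 0 => Ztil N K β h t q
  | j + 1 => fun Jc Js =>
      if hj : j < K then
        (∫ g : Fin N → ℝ,
            (Wrec N K β h t q m j Jc (Function.update Js ⟨K - 1 - j, by omega⟩ g)) ^ m (K - j)
          ∂gaussN N) ^ (m (K - j))⁻¹
      else Wrec N K β h t q m j Jc Js

/-- `Zrec … a` is the random variable `Z_a` of the broken replica interpolation. -/
def Zrec (N K : ℕ) (β h t : ℝ) (q m : ℕ → ℝ) (a : ℕ) :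
    (Fin N → Fin N → ℝ) → (Fin K → Fin N → ℝ) → ℝ :=
  Wrec N K β h t q m (K - a)

/-- The interpolating auxiliary function `α̃_N(t) = N⁻¹ E₀ log Z₀`. -/
def atilde (N K : ℕ) (β h : ℝ) (q m : ℕ → ℝ) (t : ℝ) : ℝ :=
  (N : ℝ)⁻¹ * ∫ Jc, Real.log (Wrec N K β h t q m K Jc 0) ∂gaussC N

/-- The normalized weight `f_a = Z_a^{m_a} / E_a(Z_a^{m_a}) = Z_a^{m_a} / Z_{a-1}^{m_a}`. -/
def fWeight (N K : ℕ) (β h t : ℝ) (q m : ℕ → ℝ) (a : ℕ) (Jc : Fin N → Fin N → ℝ)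
    (Js : Fin K → Fin N → ℝ) : ℝ :=
  Zrec N K β h t q m a Jc Js ^ m a / Zrec N K β h t q m (a - 1) Jc Js ^ m a

/-- The Gibbs expectation `ω(A)` of the interpolating Boltzmann factor. -/
def gibbs (N K : ℕ) (β h t : ℝ) (q : ℕ → ℝ) (A : (Fin N → Bool) → ℝ)
    (Jc : Fin N → Fin N → ℝ) (Js : Fin K → Fin N → ℝ) : ℝ :=
  (∑ σ : Fin N → Bool, A σ * bFac N K β h t q Jc Js σ) / Ztil N K β h t q Jc Js

/-- The two-replica Gibbs product expectation `Ω(A)`. -/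
def gibbs2 (N K : ℕ) (β h t : ℝ) (q : ℕ → ℝ) (A : (Fin N → Bool) → (Fin N → Bool) → ℝ)
    (Jc : Fin N → Fin N → ℝ) (Js : Fin K → Fin N → ℝ) : ℝ :=
  (∑ σ : Fin N → Bool, ∑ τ : Fin N → Bool,
      A σ τ * bFac N K β h t q Jc Js σ * bFac N K β h t q Jc Js τ) /
    Ztil N K β h t q Jc Js ^ 2

/-- `omT1 … A j` is the partially averaged state `ω̃_{K-j}(A)`:
`ω̃_K = ω` and `ω̃_{a-1}(·) = E_a (f_a ω̃_a(·))`. -/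
def omT1 (N K : ℕ) (β h t : ℝ) (q m : ℕ → ℝ) (A : (Fin N → Bool) → ℝ) :
    ℕ → (Fin N → Fin N → ℝ) → (Fin K → Fin N → ℝ) → ℝ
  | 0 => gibbs N K β h t q A
  | j + 1 => fun Jc Js =>
      if hj : j < K then
        ∫ g : Fin N → ℝ,
          fWeight N K β h t q m (K - j) Jc (Function.update Js ⟨K - 1 - j, by omega⟩ g) *
            omT1 N K β h t q m A j Jc (Function.update Js ⟨K - 1 - j, by omega⟩ g)
          ∂gaussN N
      else omT1 N K β h t q m A j Jc Js

/-- `omT2 … A j` is the partially averaged two-replica state `Ω̃_{K-j}(A)`: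
`Ω̃_K = Ω` and `Ω̃_{a-1}(·) = E_a (f_a Ω̃_a(·))`. -/
def omT2 (N K : ℕ) (β h t : ℝ) (q m : ℕ → ℝ) (A : (Fin N → Bool) → (Fin N → Bool) → ℝ) :
    ℕ → (Fin N → Fin N → ℝ) → (Fin K → Fin N → ℝ) → ℝ
  | 0 => gibbs2 N K β h t q A
  | j + 1 => fun Jc Js =>
      if hj : j < K then
        ∫ g : Fin N → ℝ,
          fWeight N K β h t q m (K - j) Jc (Function.update Js ⟨K - 1 - j, by omega⟩ g) *
            omT2 N K β h t q m A j Jc (Function.update Js ⟨K - 1 - j, by omega⟩ g)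
          ∂gaussN N
      else omT2 N K β h t q m A j Jc Js

/-- The deformed quenched average `⟨A⟩_a = E(f_1 ⋯ f_a Ω̃_a(A))` at interpolation
parameter `t`, for a function `A` of two replicas. -/
def angA (N K : ℕ) (β h t : ℝ) (q m : ℕ → ℝ) (a : ℕ)
    (A : (Fin N → Bool) → (Fin N → Bool) → ℝ) : ℝ :=
  ∫ Jc, ∫ Js,
      (∏ b ∈ Finset.Icc 1 a, fWeight N K β h t q m b Jc Js) *
        omT2 N K β h t q m A (K - a) Jc Js
    ∂gaussS K N ∂gaussC N

/-! ## Zero temperature (ground state) objects -/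

/-- The zero-temperature Parisi recursion: `parisiLevelBar K q m j` is `f̄(q_{K-j}, ·; x̄)`,
with final condition `f̄(q_K, y) = |y|`. -/
def parisiLevelBar (K : ℕ) (q m : ℕ → ℝ) : ℕ → ℝ → ℝ
  | 0 => fun y => |y|
  | j + 1 => pStep (m (K - j)) (q (K - j) - q (K - j - 1)) (parisiLevelBar K q m j)

/-- A zero-temperature piecewise constant order parameter: nodes
`0 = q_0 ≤ … ≤ q_K = 1` and nondecreasing values `0 ≤ m̄_1 ≤ … ≤ m̄_K`
(no upper bound `1`), with the convention `m̄_0 = 0`. -/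
structure ZeroTParam where
  K : ℕ
  hK : 1 ≤ K
  q : ℕ → ℝ
  m : ℕ → ℝ
  hq0 : q 0 = 0
  hqK : q K = 1
  hq_mono : ∀ a, a < K → q a ≤ q (a + 1)
  hm0 : m 0 = 0
  hm1 : 0 ≤ m 1
  hm_mono : ∀ a, 1 ≤ a → a < K → m a ≤ m (a + 1)

/-- The zero-temperature trial function `α̃(h; x̄) = f̄(0, h; x̄) - (1/2) ∫₀¹ r x̄(r) dr`. -/
def gsTrial (K : ℕ) (q m : ℕ → ℝ) (h : ℝ) : ℝ :=
  parisiLevelBar K q m K h - 1 / 2 * ∫ r in (0 : ℝ)..1, r * xFun K q m r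

/-! ## The p-spin model -/

/-- A piecewise constant functional order parameter on `[0, p/2]`:
`0 = q_0 ≤ … ≤ q_K = p/2` and `0 ≤ m_1 ≤ … ≤ m_K ≤ 1`. -/
structure POrderParam (p : ℕ) where
  K : ℕ
  hK : 1 ≤ K
  q : ℕ → ℝ
  m : ℕ → ℝ
  hq0 : q 0 = 0
  hqK : q K = p / 2
  hq_mono : ∀ a, a < K → q a ≤ q (a + 1)
  hm1 : 0 ≤ m 1
  hm_mono : ∀ a, 1 ≤ a → a < K → m a ≤ m (a + 1)
  hmK : m K ≤ 1

/-- The p-spin Hamiltonian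
`H_N(σ,h,J) = -(p!/(2N^{p-1}))^{1/2} ∑_{i_1<…<i_p} J_{i_1…i_p} σ_{i_1}⋯σ_{i_p} - h ∑_i σ_i`. -/
def hamP (p N : ℕ) (h : ℝ) (J : Finset (Fin N) → ℝ) (σ : Fin N → Bool) : ℝ :=
  -Real.sqrt ((Nat.factorial p : ℝ) / (2 * (N : ℝ) ^ (p - 1))) *
      ∑ S ∈ Finset.powersetCard p (Finset.univ : Finset (Fin N)), J S * ∏ i ∈ S, spin (σ i)
    - h * ∑ i, spin (σ i)

/-- The p-spin partition function. -/
def ZP (p N : ℕ) (β h : ℝ) (J : Finset (Fin N) → ℝ) : ℝ :=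
  ∑ σ : Fin N → Bool, Real.exp (-(β * hamP p N h J σ))

/-- The p-spin quenched average `N⁻¹ E log Z_N^{(p)}(β, h, J)`. -/
def quenchedFEP (p N : ℕ) (β h : ℝ) : ℝ :=
  (N : ℝ)⁻¹ * ∫ J, Real.log (ZP p N β h J) ∂gaussP N

/-- The functional order parameter on `[0, p/2]` as a function. -/
def xFunP (p K : ℕ) (q m : ℕ → ℝ) (r : ℝ) : ℝ :=
  if (p : ℝ) / 2 ≤ r then m K else m (sInf {a : ℕ | r < q a})

/-- The change of variables `q̄(r)` defined by `2r = p q̄^{p-1}`. -/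
def qBar (p : ℕ) (r : ℝ) : ℝ := (2 * r / p) ^ (((p : ℝ) - 1)⁻¹)

/-- The p-spin trial function
`ᾱ_p(β, h; x) = log 2 + f(0, h; x, β) - (β²/2) ∫₀^{p/2} q̄(r) x(r) dr`. -/
def trialAlphaP (p K : ℕ) (q m : ℕ → ℝ) (β h : ℝ) : ℝ :=
  Real.log 2 + parisiLevel K q m β K h
    - β ^ 2 / 2 * ∫ r in (0 : ℝ)..((p : ℝ) / 2), qBar p r * xFunP p K q m r

/-! ## Proof: functions of at most exponential growth in the disorder -/

/-- The `ℓ¹` size of the disorder. -/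
def szJ {N K : ℕ} (Jc : Fin N → Fin N → ℝ) (Js : Fin K → Fin N → ℝ) : ℝ :=
  (∑ i, ∑ j, |Jc i j|) + ∑ a, ∑ i, |Js a i|

theorem szC_nonneg {N : ℕ} (Jc : Fin N → Fin N → ℝ) : 0 ≤ ∑ i, ∑ j, |Jc i j| :=
  Finset.sum_nonneg fun _ _ => Finset.sum_nonneg fun _ _ => abs_nonneg _

theorem szS_nonneg {N K : ℕ} (Js : Fin K → Fin N → ℝ) : 0 ≤ ∑ i, ∑ j, |Js i j| :=
  Finset.sum_nonneg fun _ _ => Finset.sum_nonneg fun _ _ => abs_nonneg _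

theorem szJ_nonneg {N K : ℕ} (Jc : Fin N → Fin N → ℝ) (Js : Fin K → Fin N → ℝ) :
    0 ≤ szJ Jc Js := add_nonneg (szC_nonneg _) (szS_nonneg _)

theorem szJ_update_le {N K : ℕ} (Jc : Fin N → Fin N → ℝ) (Js : Fin K → Fin N → ℝ)
    (r : Fin K) (g : Fin N → ℝ) :
    szJ Jc (Function.update Js r g) ≤ szJ Jc Js + ∑ i, |g i| := by
  have key : ∑ a, ∑ i, |Function.update Js r g a i|
      ≤ ∑ a, ((∑ i, |Js a i|) + if a = r then ∑ i, |g i| else 0) := by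
    apply Finset.sum_le_sum
    intro a _
    by_cases ha : a = r
    · subst ha
      simp only [Function.update_self, if_true]
      have : 0 ≤ ∑ i, |Js a i| := Finset.sum_nonneg fun _ _ => abs_nonneg _
      linarith
    · simp [ha]
  rw [Finset.sum_add_distrib] at key
  simp only [Finset.sum_ite_eq', Finset.mem_univ, if_true] at key
  unfold szJ
  linarith

theorem measurable_szJ {N K : ℕ} :
    Measurable (fun p : (Fin N → Fin N → ℝ) × (Fin K → Fin N → ℝ) => szJ p.1 p.2) := by
  unfold szJ; fun_prop

theorem integrable_exp_abs (c : ℝ) :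
    Integrable (fun x : ℝ => Real.exp (c * |x|)) stdGauss := by
  unfold stdGauss
  exact integrable_exp_mul_abs (integrable_exp_mul_gaussianReal c)
    (integrable_exp_mul_gaussianReal (-c))

theorem integrable_exp_gaussN (N : ℕ) (c : ℝ) :
    Integrable (fun g : Fin N → ℝ => Real.exp (c * ∑ i, |g i|)) (gaussN N) := by
  have h : Integrable (fun g : Fin N → ℝ => ∏ i, Real.exp (c * |g i|)) (gaussN N) :=
    Integrable.fintype_prod (fun _ => integrable_exp_abs c)
  refine h.congr (ae_of_all _ fun g => ?_)
  simp only [Finset.mul_sum, Real.exp_sum]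

theorem integrable_exp_gaussS (K N : ℕ) (c : ℝ) :
    Integrable (fun g : Fin K → Fin N → ℝ => Real.exp (c * ∑ a, ∑ i, |g a i|)) (gaussS K N) := by
  have h : Integrable (fun g : Fin K → Fin N → ℝ => ∏ a, Real.exp (c * ∑ i, |g a i|))
      (gaussS K N) :=
    Integrable.fintype_prod (f := fun _ (g : Fin N → ℝ) => Real.exp (c * ∑ i, |g i|))
      (fun _ => integrable_exp_gaussN N c)
  refine h.congr (ae_of_all _ fun g => ?_)
  simp only [Finset.mul_sum, Real.exp_sum]

theorem integrable_exp_gaussC (N : ℕ) (c : ℝ) :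
    Integrable (fun g : Fin N → Fin N → ℝ => Real.exp (c * ∑ a, ∑ i, |g a i|)) (gaussC N) :=
  integrable_exp_gaussS N N c

/-- Measurable with at most exponential growth, uniformly in `t ∈ U`. -/
def EGood {N K : ℕ} (U : Set ℝ)
    (F : ℝ → (Fin N → Fin N → ℝ) → (Fin K → Fin N → ℝ) → ℝ) : Prop :=
  (∀ t ∈ U, Measurable
    (fun p : (Fin N → Fin N → ℝ) × (Fin K → Fin N → ℝ) => F t p.1 p.2)) ∧
  ∃ C : ℝ, 0 ≤ C ∧ ∀ t ∈ U, ∀ Jc Js, |F t Jc Js| ≤ Real.exp (C * (1 + szJ Jc Js))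

/-- Measurable, positive, with exponential upper and lower bounds uniformly in `t ∈ U`. -/
def EPos {N K : ℕ} (U : Set ℝ)
    (F : ℝ → (Fin N → Fin N → ℝ) → (Fin K → Fin N → ℝ) → ℝ) : Prop :=
  (∀ t ∈ U, Measurable
    (fun p : (Fin N → Fin N → ℝ) × (Fin K → Fin N → ℝ) => F t p.1 p.2)) ∧
  ∃ C : ℝ, 0 ≤ C ∧ ∀ t ∈ U, ∀ Jc Js, Real.exp (-(C * (1 + szJ Jc Js))) ≤ F t Jc Js ∧
    F t Jc Js ≤ Real.exp (C * (1 + szJ Jc Js))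

section closure
variable {N K : ℕ} {U : Set ℝ}
  {F G : ℝ → (Fin N → Fin N → ℝ) → (Fin K → Fin N → ℝ) → ℝ}

theorem EPos.pos (hF : EPos U F) {t : ℝ} (ht : t ∈ U) (Jc Js) : 0 < F t Jc Js := by
  obtain ⟨_, C, _, h⟩ := hF
  exact (Real.exp_pos _).trans_le (h t ht Jc Js).1

theorem EPos.good (hF : EPos U F) : EGood U F := by
  have hp := @EPos.pos _ _ _ _ hF
  obtain ⟨hm, C, hC, h⟩ := hF
  refine ⟨hm, C, hC, fun t ht Jc Js => ?_⟩
  rw [abs_of_pos (hp ht Jc Js)]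
  exact (h t ht Jc Js).2

theorem EGood.mul (hF : EGood U F) (hG : EGood U G) :
    EGood U (fun t Jc Js => F t Jc Js * G t Jc Js) := by
  obtain ⟨hm, C, hC, h⟩ := hF
  obtain ⟨hm', C', hC', h'⟩ := hG
  refine ⟨fun t ht => (hm t ht).mul (hm' t ht), C + C', add_nonneg hC hC',
    fun t ht Jc Js => ?_⟩
  rw [abs_mul, add_mul, Real.exp_add]
  exact mul_le_mul (h t ht Jc Js) (h' t ht Jc Js) (abs_nonneg _) (Real.exp_pos _).le

theorem two_exp_le (C S : ℝ) (hS : 0 ≤ S) (x : ℝ) (hx : 0 ≤ x) :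
    x * Real.exp (C * (1 + S)) ≤ Real.exp ((C + x) * (1 + S)) := by
  rw [add_mul, Real.exp_add, mul_comm]
  gcongr
  have h1 := Real.add_one_le_exp (x * (1 + S))
  nlinarith

theorem EGood.add (hF : EGood U F) (hG : EGood U G) :
    EGood U (fun t Jc Js => F t Jc Js + G t Jc Js) := by
  obtain ⟨hm, C, hC, h⟩ := hF
  obtain ⟨hm', C', hC', h'⟩ := hG
  refine ⟨fun t ht => (hm t ht).add (hm' t ht), C + C' + 2, by positivity,
    fun t ht Jc Js => ?_⟩
  have hS := szJ_nonneg Jc Js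
  have e1 : |F t Jc Js| ≤ Real.exp ((C + C') * (1 + szJ Jc Js)) :=
    (h t ht Jc Js).trans (Real.exp_le_exp.2 (by gcongr; linarith))
  have e2 : |G t Jc Js| ≤ Real.exp ((C + C') * (1 + szJ Jc Js)) :=
    (h' t ht Jc Js).trans (Real.exp_le_exp.2 (by gcongr; linarith))
  have := two_exp_le (C + C') (szJ Jc Js) hS 2 (by norm_num)
  have := abs_add_le (F t Jc Js) (G t Jc Js)
  linarith

theorem EGood.of_bdd (c : ℝ → ℝ) (B : ℝ) (hB : ∀ t ∈ U, |c t| ≤ B) :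
    EGood (N := N) (K := K) U (fun t _ _ => c t) := by
  refine ⟨fun t ht => measurable_const, |B|, abs_nonneg _, fun t ht Jc Js => ?_⟩
  have hS := szJ_nonneg Jc Js
  have h1 := Real.add_one_le_exp (|B| * (1 + szJ Jc Js))
  have := hB t ht
  have := le_abs_self B
  have := mul_nonneg (abs_nonneg B) hS
  linarith

theorem EGood.const (c : ℝ) : EGood (N := N) (K := K) U (fun _ _ _ => c) :=
  EGood.of_bdd (fun _ => c) |c| (fun _ _ => le_rfl)

theorem EGood.sum {ι : Type*} (s : Finset ι)
    {F : ι → ℝ → (Fin N → Fin N → ℝ) → (Fin K → Fin N → ℝ) → ℝ}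
    (hF : ∀ i ∈ s, EGood U (F i)) : EGood U (fun t Jc Js => ∑ i ∈ s, F i t Jc Js) := by
  classical
  induction s using Finset.induction_on with
  | empty => simpa using EGood.const 0
  | insert a s ha ih =>
    simp only [Finset.sum_insert ha]
    exact (hF a (by simp)).add (ih fun i hi => hF i (by simp [hi]))

theorem EGood.prod {ι : Type*} (s : Finset ι)
    {F : ι → ℝ → (Fin N → Fin N → ℝ) → (Fin K → Fin N → ℝ) → ℝ}
    (hF : ∀ i ∈ s, EGood U (F i)) : EGood U (fun t Jc Js => ∏ i ∈ s, F i t Jc Js) := by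
  classical
  induction s using Finset.induction_on with
  | empty => simpa using EGood.const 1
  | insert a s ha ih =>
    simp only [Finset.prod_insert ha]
    exact (hF a (by simp)).mul (ih fun i hi => hF i (by simp [hi]))

theorem EPos.rpow (hF : EPos U F) (p : ℝ) : EPos U (fun t Jc Js => F t Jc Js ^ p) := by
  have hp := @EPos.pos _ _ _ _ hF
  obtain ⟨hm, C, hC, h⟩ := hF
  refine ⟨fun t ht => (hm t ht).pow_const p, |p| * C, by positivity, fun t ht Jc Js => ?_⟩
  have hS := szJ_nonneg Jc Js
  obtain ⟨h1, h2⟩ := h t ht Jc Js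
  have h0 := hp ht Jc Js
  have l1 := Real.log_le_log (Real.exp_pos _) h1
  have l2 := Real.log_le_log h0 h2
  rw [Real.log_exp] at l1 l2
  have habs : |Real.log (F t Jc Js)| ≤ C * (1 + szJ Jc Js) := abs_le.2 ⟨l1, l2⟩
  have habs2 : |Real.log (F t Jc Js) * p| ≤ |p| * C * (1 + szJ Jc Js) := by
    rw [abs_mul, mul_comm, mul_assoc]
    gcongr
  dsimp only
  rw [Real.rpow_def_of_pos h0]
  exact ⟨Real.exp_le_exp.2 (abs_le.1 habs2).1, Real.exp_le_exp.2 (abs_le.1 habs2).2⟩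

theorem EPos.inv (hF : EPos U F) : EPos U (fun t Jc Js => (F t Jc Js)⁻¹) := by
  have := hF.rpow (-1)
  simpa only [Real.rpow_neg_one] using this

theorem EGood.div (hF : EGood U F) (hG : EPos U G) :
    EGood U (fun t Jc Js => F t Jc Js / G t Jc Js) := by
  simpa only [div_eq_mul_inv] using hF.mul hG.inv.good

theorem EPos.log (hF : EPos U F) : EGood U (fun t Jc Js => Real.log (F t Jc Js)) := by
  have hp := @EPos.pos _ _ _ _ hF
  obtain ⟨hm, C, hC, h⟩ := hF
  refine ⟨fun t ht => (hm t ht).log, C, hC, fun t ht Jc Js => ?_⟩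
  obtain ⟨h1, h2⟩ := h t ht Jc Js
  have h0 := hp ht Jc Js
  have l1 := Real.log_le_log (Real.exp_pos _) h1
  have l2 := Real.log_le_log h0 h2
  rw [Real.log_exp] at l1 l2
  have habs : |Real.log (F t Jc Js)| ≤ C * (1 + szJ Jc Js) := abs_le.2 ⟨l1, l2⟩
  have := Real.add_one_le_exp (C * (1 + szJ Jc Js))
  linarith

theorem EPos.sum {ι : Type*} (s : Finset ι) (hs : s.Nonempty)
    {F : ι → ℝ → (Fin N → Fin N → ℝ) → (Fin K → Fin N → ℝ) → ℝ}
    (hF : ∀ i ∈ s, EPos U (F i)) : EPos U (fun t Jc Js => ∑ i ∈ s, F i t Jc Js) := by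
  have hg := EGood.sum s (fun i hi => (hF i hi).good)
  have hp : ∀ i ∈ s, ∀ t ∈ U, ∀ Jc Js, 0 < F i t Jc Js := fun i hi t ht => (hF i hi).pos ht
  obtain ⟨i0, hi0⟩ := hs
  obtain ⟨hm, C, hC, h⟩ := hg
  obtain ⟨_, C', hC', h'⟩ := hF i0 hi0
  refine ⟨hm, C + C', by positivity, fun t ht Jc Js => ⟨?_, ?_⟩⟩
  · have hS := szJ_nonneg Jc Js
    refine le_trans ?_ ((h' t ht Jc Js).1.trans
      (Finset.single_le_sum (f := fun i => F i t Jc Js) (fun i hi => (hp i hi t ht Jc Js).le) hi0))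
    apply Real.exp_le_exp.2
    have := mul_nonneg hC (by linarith : 0 ≤ 1 + szJ Jc Js)
    linarith
  · have hS := szJ_nonneg Jc Js
    refine (le_abs_self _).trans ((h t ht Jc Js).trans ?_)
    apply Real.exp_le_exp.2
    gcongr
    linarith

theorem EGood.Jc (i j : Fin N) : EGood (K := K) U (fun _ Jc _ => Jc i j) := by
  refine ⟨fun t ht => by fun_prop, 1, zero_le_one, fun t ht Jc Js => ?_⟩
  have h1 : |Jc i j| ≤ ∑ j, |Jc i j| :=
    Finset.single_le_sum (f := fun j => |Jc i j|) (fun _ _ => abs_nonneg _) (Finset.mem_univ j)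
  have h2 : ∑ j, |Jc i j| ≤ ∑ i, ∑ j, |Jc i j| :=
    Finset.single_le_sum (f := fun i => ∑ j, |Jc i j|)
      (fun _ _ => Finset.sum_nonneg fun _ _ => abs_nonneg _) (Finset.mem_univ i)
  have h3 := szS_nonneg Js
  have := Real.add_one_le_exp (1 * (1 + szJ Jc Js))
  unfold szJ at *
  linarith

theorem EGood.Js (i : Fin K) (j : Fin N) : EGood U (fun _ _ Js => Js i j) := by
  refine ⟨fun t ht => by fun_prop, 1, zero_le_one, fun t ht Jc Js => ?_⟩
  have h1 : |Js i j| ≤ ∑ j, |Js i j| :=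
    Finset.single_le_sum (f := fun j => |Js i j|) (fun _ _ => abs_nonneg _) (Finset.mem_univ j)
  have h2 : ∑ j, |Js i j| ≤ ∑ i, ∑ j, |Js i j| :=
    Finset.single_le_sum (f := fun i => ∑ j, |Js i j|)
      (fun _ _ => Finset.sum_nonneg fun _ _ => abs_nonneg _) (Finset.mem_univ i)
  have h3 := szC_nonneg Jc
  have := Real.add_one_le_exp (1 * (1 + szJ Jc Js))
  unfold szJ at *
  linarith

/-! ### Integration of one row -/

theorem measurable_upd {t : ℝ} (hm : Measurable
    (fun p : (Fin N → Fin N → ℝ) × (Fin K → Fin N → ℝ) => F t p.1 p.2)) (r : Fin K) :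
    Measurable (fun p : ((Fin N → Fin N → ℝ) × (Fin K → Fin N → ℝ)) × (Fin N → ℝ) =>
      F t p.1.1 (Function.update p.1.2 r p.2)) := by
  have h1 : Measurable (fun p : ((Fin N → Fin N → ℝ) × (Fin K → Fin N → ℝ)) × (Fin N → ℝ) =>
      Function.update p.1.2 r p.2) :=
    (measurable_update' (X := fun _ : Fin K => Fin N → ℝ) (a := r)).comp
      ((measurable_snd.comp measurable_fst).prodMk measurable_snd)
  exact hm.comp ((measurable_fst.comp measurable_fst).prodMk h1)

theorem exp_upd_le {C : ℝ} (hC : 0 ≤ C) (Jc : Fin N → Fin N → ℝ) (Js : Fin K → Fin N → ℝ)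
    (r : Fin K) (g : Fin N → ℝ) :
    Real.exp (C * (1 + szJ Jc (Function.update Js r g)))
      ≤ Real.exp (C * (1 + szJ Jc Js)) * Real.exp (C * ∑ i, |g i|) := by
  rw [← Real.exp_add]
  apply Real.exp_le_exp.2
  have := mul_le_mul_of_nonneg_left (szJ_update_le Jc Js r g) hC
  linarith

theorem EGood.meas_upd (hF : EGood U F) {t : ℝ} (ht : t ∈ U) (Jc Js) (r : Fin K) :
    Measurable (fun g : Fin N → ℝ => F t Jc (Function.update Js r g)) :=
  (measurable_upd (hF.1 t ht) r).comp (measurable_prodMk_left (x := (Jc, Js)))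

theorem EGood.integrable_upd (hF : EGood U F) {t : ℝ} (ht : t ∈ U) (Jc Js) (r : Fin K) :
    Integrable (fun g : Fin N → ℝ => F t Jc (Function.update Js r g)) (gaussN N) := by
  have hm := hF.meas_upd ht Jc Js r
  obtain ⟨_, C, hC, h⟩ := hF
  refine Integrable.mono' ((integrable_exp_gaussN N C).const_mul (Real.exp (C * (1 + szJ Jc Js))))
    hm.aestronglyMeasurable (ae_of_all _ fun g => ?_)
  exact (h t ht _ _).trans (exp_upd_le hC Jc Js r g)

theorem one_le_cst {C : ℝ} (hC : 0 ≤ C) :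
    1 ≤ ∫ g : Fin N → ℝ, Real.exp (C * ∑ i, |g i|) ∂gaussN N := by
  have := integral_mono (μ := gaussN N) (integrable_const (1 : ℝ)) (integrable_exp_gaussN N C)
    (fun g => by
      have h : 0 ≤ C * ∑ i, |g i| := mul_nonneg hC (Finset.sum_nonneg fun _ _ => abs_nonneg _)
      simpa using Real.one_le_exp h)
  simpa using this

theorem cst_mul_exp_le {A : ℝ} (hA : 0 < A) {C S : ℝ} (hS : 0 ≤ S) :
    A * Real.exp (C * (1 + S)) ≤ Real.exp ((C + |Real.log A|) * (1 + S)) := by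
  conv_lhs => rw [← Real.exp_log hA, ← Real.exp_add]
  apply Real.exp_le_exp.2
  have := le_abs_self (Real.log A)
  have := mul_nonneg (abs_nonneg (Real.log A)) hS
  linarith

theorem EGood.avg (hF : EGood U F) (r : Fin K) :
    EGood U (fun t Jc Js => ∫ g, F t Jc (Function.update Js r g) ∂gaussN N) := by
  have hi := @EGood.integrable_upd _ _ _ _ hF
  obtain ⟨hm, C, hC, h⟩ := hF
  have h1 := one_le_cst (N := N) hC
  set A := ∫ g : Fin N → ℝ, Real.exp (C * ∑ i, |g i|) ∂gaussN N with hA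
  refine ⟨fun t ht => ?_, C + |Real.log A|, by positivity, fun t ht Jc Js => ?_⟩
  · exact ((measurable_upd (hm t ht) r).stronglyMeasurable.integral_prod_right').measurable
  · refine le_trans ?_ (cst_mul_exp_le (by linarith) (szJ_nonneg Jc Js))
    refine (abs_integral_le_integral_abs).trans ?_
    rw [hA, mul_comm, ← integral_const_mul]
    exact integral_mono (hi ht Jc Js r).abs ((integrable_exp_gaussN N C).const_mul _)
      (fun g => (h t ht _ _).trans (exp_upd_le hC Jc Js r g))

theorem EPos.avg (hF : EPos U F) (r : Fin K) :
    EPos U (fun t Jc Js => ∫ g, F t Jc (Function.update Js r g) ∂gaussN N) := by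
  have hi := @EGood.integrable_upd _ _ _ _ hF.good
  obtain ⟨hm', C', hC', h'⟩ := hF.good.avg r
  obtain ⟨hm, C, hC, h⟩ := hF
  set B := ∫ g : Fin N → ℝ, Real.exp (-C * ∑ i, |g i|) ∂gaussN N with hB
  have hBpos : 0 < B := integral_exp_pos (integrable_exp_gaussN N (-C))
  refine ⟨hm', C' + (C + |Real.log B|), by positivity, fun t ht Jc Js => ⟨?_, ?_⟩⟩
  · have hS := szJ_nonneg Jc Js
    have e1 : Real.exp (-(C * (1 + szJ Jc Js))) * B
        ≤ ∫ g, F t Jc (Function.update Js r g) ∂gaussN N := by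
      rw [hB, ← integral_const_mul]
      refine integral_mono ((integrable_exp_gaussN N (-C)).const_mul _) (hi ht Jc Js r)
        (fun g => ?_)
      refine le_trans ?_ (h t ht _ _).1
      dsimp only
      rw [← Real.exp_add]
      apply Real.exp_le_exp.2
      have := mul_le_mul_of_nonneg_left (szJ_update_le Jc Js r g) hC
      linarith
    refine le_trans ?_ e1
    conv_rhs => rw [← Real.exp_log hBpos, ← Real.exp_add]
    apply Real.exp_le_exp.2
    have := neg_abs_le (Real.log B)
    have := mul_nonneg (abs_nonneg (Real.log B)) hS
    have := mul_nonneg hC' (by linarith : 0 ≤ 1 + szJ Jc Js)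
    linarith
  · have hS := szJ_nonneg Jc Js
    refine (le_abs_self _).trans ((h' t ht Jc Js).trans ?_)
    apply Real.exp_le_exp.2
    gcongr
    have := abs_nonneg (Real.log B)
    linarith

theorem EGood.hasDerivAt_avg (hU : IsOpen U) (hF : EGood U F) (hG : EGood U G)
    (hd : ∀ t ∈ U, ∀ Jc Js, HasDerivAt (fun s => F s Jc Js) (G t Jc Js) t)
    (r : Fin K) {t : ℝ} (ht : t ∈ U) (Jc Js) :
    HasDerivAt (fun s => ∫ g, F s Jc (Function.update Js r g) ∂gaussN N)
      (∫ g, G t Jc (Function.update Js r g) ∂gaussN N) t := by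
  obtain ⟨C, hC, h⟩ := hG.2
  set b : (Fin N → ℝ) → ℝ :=
    fun g => Real.exp (C * (1 + szJ Jc Js)) * Real.exp (C * ∑ i, |g i|) with hb
  have hbi : Integrable b (gaussN N) := (integrable_exp_gaussN N C).const_mul _
  have hbd : ∀ g, ∀ s ∈ U, |G s Jc (Function.update Js r g)| ≤ b g :=
    fun g s hs => (h s hs _ _).trans (exp_upd_le hC Jc Js r g)
  clear_value b
  have hFi := hF.integrable_upd ht Jc Js r
  have hGm := (hG.meas_upd ht Jc Js r).aestronglyMeasurable (μ := gaussN N)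
  refine (hasDerivAt_integral_of_dominated_loc_of_deriv_le (hU.mem_nhds ht)
    (F := fun s g => F s Jc (Function.update Js r g))
    (F' := fun s g => G s Jc (Function.update Js r g)) (bound := b)
    ?_ hFi hGm ?_ hbi ?_).2
  · filter_upwards [hU.mem_nhds ht] with s hs
    exact (hF.meas_upd hs Jc Js r).aestronglyMeasurable
  · exact ae_of_all _ fun g s hs => hbd g s hs
  · exact ae_of_all _ fun g s hs => hd s hs Jc _

theorem EGood.meas_c (hF : EGood U F) {t : ℝ} (ht : t ∈ U) (Js) :
    Measurable (fun Jc => F t Jc Js) :=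
  (hF.1 t ht).comp (measurable_prodMk_right (y := Js))

theorem EGood.bound_c (hF : EGood U F) (Js : Fin K → Fin N → ℝ) :
    ∃ b : (Fin N → Fin N → ℝ) → ℝ, Integrable b (gaussC N) ∧
      ∀ t ∈ U, ∀ Jc, |F t Jc Js| ≤ b Jc := by
  obtain ⟨_, C, hC, h⟩ := hF
  refine ⟨fun Jc => Real.exp (C * (1 + ∑ a, ∑ i, |Js a i|)) *
    Real.exp (C * ∑ i, ∑ j, |Jc i j|), (integrable_exp_gaussC N C).const_mul _,
    fun t ht Jc => (h t ht Jc Js).trans (le_of_eq ?_)⟩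
  dsimp only
  rw [← Real.exp_add]
  unfold szJ
  congr 1
  ring

theorem EGood.integrable_s (hF : EGood U F) {t : ℝ} (ht : t ∈ U) (Jc) :
    Integrable (fun Js => F t Jc Js) (gaussS K N) := by
  obtain ⟨hm, C, hC, h⟩ := hF
  refine Integrable.mono' ((integrable_exp_gaussS K N C).const_mul
    (Real.exp (C * (1 + ∑ a, ∑ i, |Jc a i|))))
    ((hm t ht).comp (measurable_prodMk_left (x := Jc))).aestronglyMeasurable
    (ae_of_all _ fun Js => (h t ht Jc Js).trans (le_of_eq ?_))
  rw [← Real.exp_add]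
  unfold szJ
  congr 1
  ring

theorem EGood.hasDerivAt_c (hU : IsOpen U) (hF : EGood U F) (hG : EGood U G)
    (hd : ∀ t ∈ U, ∀ Jc Js, HasDerivAt (fun s => F s Jc Js) (G t Jc Js) t)
    {t : ℝ} (ht : t ∈ U) (Js) :
    HasDerivAt (fun s => ∫ Jc, F s Jc Js ∂gaussC N) (∫ Jc, G t Jc Js ∂gaussC N) t := by
  obtain ⟨b, hb, hbd⟩ := hG.bound_c Js
  obtain ⟨b', hb', hbd'⟩ := hF.bound_c Js
  refine (hasDerivAt_integral_of_dominated_loc_of_deriv_le (hU.mem_nhds ht)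
    (F := fun s Jc => F s Jc Js) (F' := fun s Jc => G s Jc Js) (bound := b)
    ?_ ?_ (hG.meas_c ht Js).aestronglyMeasurable ?_ hb ?_).2
  · filter_upwards [hU.mem_nhds ht] with s hs
    exact (hF.meas_c hs Js).aestronglyMeasurable
  · exact hb'.mono' (hF.meas_c ht Js).aestronglyMeasurable (ae_of_all _ fun Jc => hbd' t ht Jc)
  · exact ae_of_all _ fun Jc s hs => hbd s hs Jc
  · exact ae_of_all _ fun Jc s hs => hd s hs Jc _

theorem mp_update (r : Fin K) :
    MeasurePreserving (fun p : (Fin K → Fin N → ℝ) × (Fin N → ℝ) => Function.update p.1 r p.2)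
      ((gaussS K N).prod (gaussN N)) (gaussS K N) := by
  refine ⟨measurable_update', ?_⟩
  unfold gaussS
  symm
  apply Measure.pi_eq
  intro s hs
  rw [Measure.map_apply measurable_update' (MeasurableSet.univ_pi hs)]
  have : (fun p : (Fin K → Fin N → ℝ) × (Fin N → ℝ) => Function.update p.1 r p.2) ⁻¹'
      (Set.univ.pi s) = (Set.univ.pi (Function.update s r Set.univ)) ×ˢ s r := by
    ext ⟨x, g⟩
    simp only [Set.mem_preimage, Set.mem_pi, Set.mem_univ, true_implies, Set.mem_prod]
    constructor
    · intro hx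
      refine ⟨fun i => ?_, by simpa using hx r⟩
      by_cases hi : i = r
      · subst hi; simp
      · simpa [hi] using hx i
    · rintro ⟨hx, hg⟩ i
      by_cases hi : i = r
      · subst hi; simpa using hg
      · simpa [hi] using hx i
  rw [this, Measure.prod_prod, Measure.pi_pi, ← Finset.mul_prod_erase _ _ (Finset.mem_univ r),
    ← Finset.mul_prod_erase (a := r) _ (fun i => (gaussN N) (s i)) (Finset.mem_univ r)]
  simp only [Function.update_self, measure_univ, one_mul]
  rw [mul_comm]
  congr 1
  apply Finset.prod_congr rfl
  intro i hi
  rw [Function.update_of_ne (Finset.ne_of_mem_erase hi)]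

theorem EGood.integral_s (hF : EGood U F) {t : ℝ} (ht : t ∈ U) (Jc) (r : Fin K) :
    ∫ Js, F t Jc Js ∂gaussS K N =
      ∫ Js, ∫ g, F t Jc (Function.update Js r g) ∂gaussN N ∂gaussS K N := by
  have hi := hF.integrable_s ht Jc
  have mp := mp_update (N := N) r
  have h1 : ∫ Js, F t Jc Js ∂gaussS K N =
      ∫ p : (Fin K → Fin N → ℝ) × (Fin N → ℝ), F t Jc (Function.update p.1 r p.2)
        ∂((gaussS K N).prod (gaussN N)) := by
    conv_lhs => rw [← mp.map_eq]
    rw [integral_map mp.measurable.aemeasurable]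
    rw [mp.map_eq]
    exact hi.aestronglyMeasurable
  rw [h1, integral_prod]
  exact mp.integrable_comp_of_integrable hi

end closure

/-! ### Linear growth, and the Boltzmann factor -/

/-- Measurable with at most linear growth, uniformly in `t ∈ U`. -/
def ELin {N K : ℕ} (U : Set ℝ)
    (F : ℝ → (Fin N → Fin N → ℝ) → (Fin K → Fin N → ℝ) → ℝ) : Prop :=
  (∀ t ∈ U, Measurable
    (fun p : (Fin N → Fin N → ℝ) × (Fin K → Fin N → ℝ) => F t p.1 p.2)) ∧
  ∃ C : ℝ, 0 ≤ C ∧ ∀ t ∈ U, ∀ Jc Js, |F t Jc Js| ≤ C * (1 + szJ Jc Js)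

section linear
variable {N K : ℕ} {U : Set ℝ}
  {F G : ℝ → (Fin N → Fin N → ℝ) → (Fin K → Fin N → ℝ) → ℝ}

theorem ELin.exp (hF : ELin U F) : EPos U (fun t Jc Js => Real.exp (F t Jc Js)) := by
  obtain ⟨hm, C, hC, h⟩ := hF
  exact ⟨fun t ht => (hm t ht).exp, C, hC, fun t ht Jc Js =>
    ⟨Real.exp_le_exp.2 (abs_le.1 (h t ht Jc Js)).1,
      Real.exp_le_exp.2 (abs_le.1 (h t ht Jc Js)).2⟩⟩

theorem ELin.add (hF : ELin U F) (hG : ELin U G) :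
    ELin U (fun t Jc Js => F t Jc Js + G t Jc Js) := by
  obtain ⟨hm, C, hC, h⟩ := hF
  obtain ⟨hm', C', hC', h'⟩ := hG
  refine ⟨fun t ht => (hm t ht).add (hm' t ht), C + C', by positivity, fun t ht Jc Js => ?_⟩
  rw [add_mul]
  exact (abs_add_le _ _).trans (add_le_add (h t ht Jc Js) (h' t ht Jc Js))

theorem ELin.bmul (c : ℝ → ℝ) (B : ℝ) (hB : ∀ t ∈ U, |c t| ≤ B) (hF : ELin U F) :
    ELin U (fun t Jc Js => c t * F t Jc Js) := by
  obtain ⟨hm, C, hC, h⟩ := hF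
  refine ⟨fun t ht => (hm t ht).const_mul _, |B| * C, by positivity, fun t ht Jc Js => ?_⟩
  rw [abs_mul, mul_assoc]
  exact mul_le_mul ((hB t ht).trans (le_abs_self B)) (h t ht Jc Js) (abs_nonneg _) (abs_nonneg _)

theorem ELin.cmul (c : ℝ) (hF : ELin U F) : ELin U (fun t Jc Js => c * F t Jc Js) :=
  hF.bmul (fun _ => c) |c| (fun _ _ => le_rfl)

theorem ELin.const (c : ℝ) : ELin (N := N) (K := K) U (fun _ _ _ => c) := by
  refine ⟨fun t ht => measurable_const, |c|, abs_nonneg _, fun t ht Jc Js => ?_⟩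
  have := mul_nonneg (abs_nonneg c) (szJ_nonneg Jc Js)
  linarith

theorem ELin.sum {ι : Type*} (s : Finset ι)
    {F : ι → ℝ → (Fin N → Fin N → ℝ) → (Fin K → Fin N → ℝ) → ℝ}
    (hF : ∀ i ∈ s, ELin U (F i)) : ELin U (fun t Jc Js => ∑ i ∈ s, F i t Jc Js) := by
  classical
  induction s using Finset.induction_on with
  | empty => simpa using ELin.const 0
  | insert a s ha ih =>
    simp only [Finset.sum_insert ha]
    exact (hF a (by simp)).add (ih fun i hi => hF i (by simp [hi]))

theorem ELin.Jc (i j : Fin N) : ELin (K := K) U (fun _ Jc _ => Jc i j) := by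
  refine ⟨fun t ht => by fun_prop, 1, zero_le_one, fun t ht Jc Js => ?_⟩
  have h1 : |Jc i j| ≤ ∑ j, |Jc i j| :=
    Finset.single_le_sum (f := fun j => |Jc i j|) (fun _ _ => abs_nonneg _) (Finset.mem_univ j)
  have h2 : ∑ j, |Jc i j| ≤ ∑ i, ∑ j, |Jc i j| :=
    Finset.single_le_sum (f := fun i => ∑ j, |Jc i j|)
      (fun _ _ => Finset.sum_nonneg fun _ _ => abs_nonneg _) (Finset.mem_univ i)
  have h3 := szS_nonneg Js
  unfold szJ at *
  linarith

theorem ELin.Js (i : Fin K) (j : Fin N) : ELin U (fun _ _ Js => Js i j) := by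
  refine ⟨fun t ht => by fun_prop, 1, zero_le_one, fun t ht Jc Js => ?_⟩
  have h1 : |Js i j| ≤ ∑ j, |Js i j| :=
    Finset.single_le_sum (f := fun j => |Js i j|) (fun _ _ => abs_nonneg _) (Finset.mem_univ j)
  have h2 : ∑ j, |Js i j| ≤ ∑ i, ∑ j, |Js i j| :=
    Finset.single_le_sum (f := fun i => ∑ j, |Js i j|)
      (fun _ _ => Finset.sum_nonneg fun _ _ => abs_nonneg _) (Finset.mem_univ i)
  have h3 := szC_nonneg Jc
  unfold szJ at *
  linarith

end linear

theorem bFac_EPos {N K : ℕ} (β h : ℝ) (q : ℕ → ℝ) {U : Set ℝ} (hU : U ⊆ Set.Ioo 0 1)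
    (σ : Fin N → Bool) :
    EPos (N := N) (K := K) U (fun t Jc Js => bFac N K β h t q Jc Js σ) := by
  unfold bFac
  apply ELin.exp
  refine ((ELin.bmul (fun t => β * Real.sqrt (t / N)) |β| ?_ ?_).add
    (ELin.const _)).add (ELin.bmul (fun t => β * Real.sqrt (1 - t)) |β| ?_ ?_)
  · intro t ht
    obtain ⟨h0, h1⟩ := hU ht
    rw [abs_mul, abs_of_nonneg (Real.sqrt_nonneg _)]
    refine mul_le_of_le_one_right (abs_nonneg _) (Real.sqrt_le_one.2 ?_)
    rcases Nat.eq_zero_or_pos N with h | h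
    · simp [h]
    · have : (1 : ℝ) ≤ N := by exact_mod_cast h
      rw [div_le_one (by linarith)]
      linarith
  · refine ELin.sum _ fun i _ => ELin.sum _ fun j _ => ?_
    by_cases hij : i < j
    · simp only [hij, if_true]
      have := (ELin.Jc (K := K) (U := U) i j).cmul (spin (σ i) * spin (σ j))
      simpa only [mul_comm, mul_left_comm, mul_assoc] using this
    · simp only [hij, if_false]
      exact ELin.const 0
  · intro t ht
    obtain ⟨h0, h1⟩ := hU ht
    rw [abs_mul, abs_of_nonneg (Real.sqrt_nonneg _)]
    exact mul_le_of_le_one_right (abs_nonneg _) (Real.sqrt_le_one.2 (by linarith))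
  · refine ELin.sum _ fun a _ => ELin.cmul _ (ELin.sum _ fun i _ => ?_)
    have := (ELin.Js (N := N) (U := U) a i).cmul (spin (σ i))
    simpa only [mul_comm] using this

theorem Ztil_EPos {N K : ℕ} (β h : ℝ) (q : ℕ → ℝ) {U : Set ℝ} (hU : U ⊆ Set.Ioo 0 1) :
    EPos (N := N) (K := K) U (fun t Jc Js => Ztil N K β h t q Jc Js) := by
  unfold Ztil
  exact EPos.sum _ Finset.univ_nonempty fun σ _ => bFac_EPos β h q hU σ

/-- The logarithmic derivative `Z̃⁻¹ ∂_t Z̃`. -/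
def D0 (N K : ℕ) (β h : ℝ) (q : ℕ → ℝ) (t : ℝ) (Jc : Fin N → Fin N → ℝ)
    (Js : Fin K → Fin N → ℝ) : ℝ :=
  β / (2 * Real.sqrt (t * N)) *
      ∑ i, ∑ j, (if i < j then
        Jc i j * gibbs N K β h t q (fun σ => spin (σ i) * spin (σ j)) Jc Js
        else 0)
    - β / (2 * Real.sqrt (1 - t)) *
        ∑ a : Fin K, Real.sqrt (q (a.val + 1) - q a.val) *
          ∑ i, Js a i * gibbs N K β h t q (fun σ => spin (σ i)) Jc Js

theorem gibbs_EGood {N K : ℕ} (β h : ℝ) (q : ℕ → ℝ) {U : Set ℝ} (hU : U ⊆ Set.Ioo 0 1)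
    (A : (Fin N → Bool) → ℝ) :
    EGood (N := N) (K := K) U (fun t Jc Js => gibbs N K β h t q A Jc Js) := by
  unfold gibbs
  refine EGood.div (EGood.sum _ fun σ _ => ?_) (Ztil_EPos β h q hU)
  exact (EGood.const _).mul (bFac_EPos β h q hU σ).good

theorem D0_EGood {N K : ℕ} (hN : 1 ≤ N) (β h : ℝ) (q : ℕ → ℝ) {δ : ℝ} (hδ : 0 < δ) :
    EGood (N := N) (K := K) (Set.Ioo δ (1 - δ)) (fun t Jc Js => D0 N K β h q t Jc Js) := by
  have hU : Set.Ioo δ (1 - δ) ⊆ Set.Ioo (0 : ℝ) 1 := fun x hx =>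
    ⟨hδ.trans hx.1, by linarith [hx.2]⟩
  have hN' : (1 : ℝ) ≤ N := by exact_mod_cast hN
  unfold D0
  simp only [sub_eq_add_neg (_ * _), ← neg_mul]
  refine ((EGood.of_bdd _ (|β| / (2 * Real.sqrt δ)) ?_).mul ?_).add
    ((EGood.of_bdd _ (|β| / (2 * Real.sqrt δ)) ?_).mul ?_)
  · intro t ht
    have : 0 < Real.sqrt δ := Real.sqrt_pos.2 hδ
    rw [abs_div, abs_of_nonneg (by positivity : 0 ≤ 2 * Real.sqrt (t * N))]
    gcongr
    nlinarith [ht.1]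
  · refine EGood.sum _ fun i _ => EGood.sum _ fun j _ => ?_
    by_cases hij : i < j
    · simp only [hij, if_true]
      exact (EGood.Jc i j).mul (gibbs_EGood β h q hU _)
    · simp only [hij, if_false]
      exact EGood.const 0
  · intro t ht
    have : 0 < Real.sqrt δ := Real.sqrt_pos.2 hδ
    rw [abs_neg, abs_div, abs_of_nonneg (by positivity : 0 ≤ 2 * Real.sqrt (1 - t))]
    gcongr
    linarith [ht.2]
  · refine EGood.sum _ fun a _ => (EGood.const _).mul (EGood.sum _ fun i _ => ?_)
    exact (EGood.Js a i).mul (gibbs_EGood β h q hU _)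

theorem sum_mul_gibbs {N K : ℕ} (β h t : ℝ) (q : ℕ → ℝ) (A : (Fin N → Bool) → ℝ)
    (Jc : Fin N → Fin N → ℝ) (Js : Fin K → Fin N → ℝ) (hZ : Ztil N K β h t q Jc Js ≠ 0) :
    Ztil N K β h t q Jc Js * gibbs N K β h t q A Jc Js
      = ∑ σ, A σ * bFac N K β h t q Jc Js σ := by
  unfold gibbs
  field_simp

theorem Ztil_hasDerivAt {N K : ℕ} (hN : 1 ≤ N) (β h : ℝ) (q : ℕ → ℝ) {t : ℝ}
    (ht : t ∈ Set.Ioo (0 : ℝ) 1) (Jc : Fin N → Fin N → ℝ) (Js : Fin K → Fin N → ℝ) :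
    HasDerivAt (fun s => Ztil N K β h s q Jc Js)
      (Ztil N K β h t q Jc Js * D0 N K β h q t Jc Js) t := by
  have hZ : Ztil N K β h t q Jc Js ≠ 0 :=
    ((Ztil_EPos β h q (U := Set.Ioo 0 1) le_rfl).pos ht Jc Js).ne'
  have hN' : (0 : ℝ) < N := by exact_mod_cast hN
  have ht0 := ht.1
  have ht1 : 0 < 1 - t := by linarith [ht.2]
  have s1 : HasDerivAt (fun s : ℝ => Real.sqrt (s / N)) (1 / (2 * Real.sqrt (t * N))) t := by
    have h1 := ((hasDerivAt_id' t).div_const (N : ℝ)).sqrt (div_pos ht0 hN').ne'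
    convert h1 using 1
    rw [Real.sqrt_mul ht0.le, Real.sqrt_div ht0.le]
    have e := Real.mul_self_sqrt hN'.le
    have : 0 < Real.sqrt N := Real.sqrt_pos.2 hN'
    have : 0 < Real.sqrt t := Real.sqrt_pos.2 ht0
    field_simp
    nlinarith
  have s2 : HasDerivAt (fun s : ℝ => Real.sqrt (1 - s)) (-(1 / (2 * Real.sqrt (1 - t)))) t := by
    have h1 := ((hasDerivAt_id' t).const_sub 1).sqrt ht1.ne'
    convert h1 using 1
    ring
  have hd : HasDerivAt (fun s => Ztil N K β h s q Jc Js)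
      (∑ σ : Fin N → Bool, (bFac N K β h t q Jc Js σ *
        (β * (1 / (2 * Real.sqrt (t * N))) *
          (∑ i, ∑ j, (if i < j then Jc i j * spin (σ i) * spin (σ j) else 0))
        + β * (-(1 / (2 * Real.sqrt (1 - t)))) *
          ∑ a : Fin K, Real.sqrt (q (a.val + 1) - q a.val) * ∑ i, Js a i * spin (σ i)))) t := by
    unfold Ztil
    refine HasDerivAt.fun_sum fun σ _ => ?_
    unfold bFac
    exact ((((s1.const_mul β).mul_const _).add_const _).add ((s2.const_mul β).mul_const _)).exp
  convert hd using 1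
  unfold D0
  have e1 : Ztil N K β h t q Jc Js * (∑ i, ∑ j, (if i < j then
        Jc i j * gibbs N K β h t q (fun σ => spin (σ i) * spin (σ j)) Jc Js else 0))
      = ∑ σ, bFac N K β h t q Jc Js σ *
          (∑ i, ∑ j, (if i < j then Jc i j * spin (σ i) * spin (σ j) else 0)) := by
    simp only [Finset.mul_sum]
    rw [Finset.sum_comm (s := (Finset.univ : Finset (Fin N → Bool)))]
    refine Finset.sum_congr rfl fun i _ => ?_
    rw [Finset.sum_comm (s := (Finset.univ : Finset (Fin N → Bool)))]
    refine Finset.sum_congr rfl fun j _ => ?_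
    by_cases hij : i < j
    · simp only [hij, if_true]
      rw [mul_left_comm, sum_mul_gibbs β h t q _ Jc Js hZ, Finset.mul_sum]
      exact Finset.sum_congr rfl fun σ _ => by ring
    · simp [hij]
  have e2 : Ztil N K β h t q Jc Js * (∑ a : Fin K, Real.sqrt (q (a.val + 1) - q a.val) *
          ∑ i, Js a i * gibbs N K β h t q (fun σ => spin (σ i)) Jc Js)
      = ∑ σ, bFac N K β h t q Jc Js σ *
          (∑ a : Fin K, Real.sqrt (q (a.val + 1) - q a.val) * ∑ i, Js a i * spin (σ i)) := by
    simp only [Finset.mul_sum]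
    rw [Finset.sum_comm (s := (Finset.univ : Finset (Fin N → Bool)))]
    refine Finset.sum_congr rfl fun a _ => ?_
    rw [Finset.sum_comm (s := (Finset.univ : Finset (Fin N → Bool)))]
    refine Finset.sum_congr rfl fun i _ => ?_
    rw [mul_left_comm, mul_left_comm (Ztil _ _ _ _ _ _ _ _),
      sum_mul_gibbs β h t q _ Jc Js hZ, Finset.mul_sum, Finset.mul_sum]
    exact Finset.sum_congr rfl fun σ _ => by ring
  simp only [mul_add, Finset.sum_add_distrib]
  rw [mul_sub, sub_eq_add_neg]
  congr 1
  · rw [mul_left_comm, e1, Finset.mul_sum]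
    exact Finset.sum_congr rfl fun σ _ => by ring
  · rw [mul_left_comm, e2, Finset.mul_sum, ← Finset.sum_neg_distrib]
    exact Finset.sum_congr rfl fun σ _ => by ring

/-! ### The recursion -/

/-- The logarithmic derivative of `Z_{K-j}`. -/
def Drec (N K : ℕ) (β h : ℝ) (q m : ℕ → ℝ) :
    ℕ → ℝ → (Fin N → Fin N → ℝ) → (Fin K → Fin N → ℝ) → ℝ
  | 0 => D0 N K β h q
  | j + 1 => fun t Jc Js =>
      if hj : j < K then
        ∫ g : Fin N → ℝ,
          fWeight N K β h t q m (K - j) Jc (Function.update Js ⟨K - 1 - j, by omega⟩ g) *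
            Drec N K β h q m j t Jc (Function.update Js ⟨K - 1 - j, by omega⟩ g)
          ∂gaussN N
      else Drec N K β h q m j t Jc Js

section recursion
variable {N K : ℕ} {β h : ℝ} {q m : ℕ → ℝ} {U : Set ℝ}

theorem Wrec_succ {j : ℕ} (hj : j < K) (t : ℝ) (Jc Js) :
    Wrec N K β h t q m (j + 1) Jc Js = (∫ g : Fin N → ℝ,
      (Wrec N K β h t q m j Jc (Function.update Js ⟨K - 1 - j, by omega⟩ g)) ^ m (K - j)
          ∂gaussN N) ^ (m (K - j))⁻¹ := by
  rw [Wrec]; exact dif_pos hj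

theorem Drec_succ {j : ℕ} (hj : j < K) (t : ℝ) (Jc Js) :
    Drec N K β h q m (j + 1) t Jc Js = ∫ g : Fin N → ℝ,
          fWeight N K β h t q m (K - j) Jc (Function.update Js ⟨K - 1 - j, by omega⟩ g) *
            Drec N K β h q m j t Jc (Function.update Js ⟨K - 1 - j, by omega⟩ g)
          ∂gaussN N := by
  rw [Drec]; exact dif_pos hj

theorem fWeight_eq {j : ℕ} (hj : j < K) (t : ℝ) (Jc Js) :
    fWeight N K β h t q m (K - j) Jc Js
      = Wrec N K β h t q m j Jc Js ^ m (K - j) / Wrec N K β h t q m (j + 1) Jc Js ^ m (K - j) := by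
  unfold fWeight Zrec
  rw [show K - (K - j) = j by omega, show K - (K - j - 1) = j + 1 by omega]

theorem Wrec_EPos (hU : U ⊆ Set.Ioo 0 1) (j : ℕ) (hj : j ≤ K) :
    EPos (N := N) (K := K) U (fun t Jc Js => Wrec N K β h t q m j Jc Js) := by
  induction j with
  | zero => exact Ztil_EPos β h q hU
  | succ j ih =>
    simp only [Wrec_succ (show j < K by omega)]
    exact (((ih (by omega)).rpow _).avg _).rpow _

theorem fWeight_EGood (hU : U ⊆ Set.Ioo 0 1) (j : ℕ) (hj : j < K) :
    EGood (N := N) (K := K) U (fun t Jc Js => fWeight N K β h t q m (K - j) Jc Js) := by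
  simp only [fWeight_eq hj]
  exact ((Wrec_EPos hU j hj.le).rpow _).good.div ((Wrec_EPos hU (j + 1) hj).rpow _)

theorem Drec_EGood (hU : U ⊆ Set.Ioo 0 1) (h0 : EGood (N := N) (K := K) U (D0 N K β h q))
    (j : ℕ) (hj : j ≤ K) :
    EGood (N := N) (K := K) U (fun t Jc Js => Drec N K β h q m j t Jc Js) := by
  induction j with
  | zero => exact h0
  | succ j ih =>
    simp only [Drec_succ (show j < K by omega)]
    exact EGood.avg (F := fun t Jc Js => fWeight N K β h t q m (K - j) Jc Js *
      Drec N K β h q m j t Jc Js) ((fWeight_EGood hU j (by omega)).mul (ih (by omega))) _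

/-- `Z_{a}` depends only on the rows of level at most `a`. -/
theorem Wrec_dep (t : ℝ) (j : ℕ) (hj : j ≤ K) (Jc : Fin N → Fin N → ℝ)
    (Js Js' : Fin K → Fin N → ℝ) (hJ : ∀ r : Fin K, r.val < K - j → Js r = Js' r) :
    Wrec N K β h t q m j Jc Js = Wrec N K β h t q m j Jc Js' := by
  induction j generalizing Js Js' with
  | zero =>
    have : Js = Js' := funext fun r => hJ r (by have := r.2; omega)
    rw [this]
  | succ j ih =>
    rw [Wrec_succ (by omega), Wrec_succ (by omega)]
    congr 1
    refine integral_congr_ae (ae_of_all _ fun g => ?_)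
    dsimp only
    rw [ih (by omega)]
    intro r hr
    by_cases hr' : r = ⟨K - 1 - j, by omega⟩
    · rw [hr', Function.update_self, Function.update_self]
    · rw [Function.update_of_ne hr', Function.update_of_ne hr']
      apply hJ
      have : r.val ≠ K - 1 - j := fun e => hr' (Fin.ext e)
      omega

theorem fWeight_dep (t : ℝ) (j : ℕ) (hj : j < K) (Jc : Fin N → Fin N → ℝ)
    (Js Js' : Fin K → Fin N → ℝ) (hJ : ∀ r : Fin K, r.val < K - j → Js r = Js' r) :
    fWeight N K β h t q m (K - j) Jc Js = fWeight N K β h t q m (K - j) Jc Js' := by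
  rw [fWeight_eq hj, fWeight_eq hj, Wrec_dep t j hj.le Jc Js Js' hJ,
    Wrec_dep t (j + 1) hj Jc Js Js' (fun r hr => hJ r (by omega))]

theorem Drec_dep (t : ℝ) (j : ℕ) (hj : j ≤ K) (Jc : Fin N → Fin N → ℝ)
    (Js Js' : Fin K → Fin N → ℝ) (hJ : ∀ r : Fin K, r.val < K - j → Js r = Js' r) :
    Drec N K β h q m j t Jc Js = Drec N K β h q m j t Jc Js' := by
  induction j generalizing Js Js' with
  | zero =>
    have : Js = Js' := funext fun r => hJ r (by have := r.2; omega)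
    rw [this]
  | succ j ih =>
    rw [Drec_succ (by omega), Drec_succ (by omega)]
    refine integral_congr_ae (ae_of_all _ fun g => ?_)
    have key : ∀ r : Fin K, r.val < K - j →
        Function.update Js ⟨K - 1 - j, by omega⟩ g r
          = Function.update Js' ⟨K - 1 - j, by omega⟩ g r := by
      intro r hr
      by_cases hr' : r = ⟨K - 1 - j, by omega⟩
      · rw [hr', Function.update_self, Function.update_self]
      · rw [Function.update_of_ne hr', Function.update_of_ne hr']
        apply hJ
        have : r.val ≠ K - 1 - j := fun e => hr' (Fin.ext e)
        omega
    dsimp only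
    rw [ih (by omega) _ _ key, fWeight_dep t j (by omega) Jc _ _ key]

theorem Wrec_hasDerivAt (hN : 1 ≤ N) (hm : ∀ a, 1 ≤ a → a ≤ K → 0 < m a)
    (hUo : IsOpen U) (hU : U ⊆ Set.Ioo 0 1)
    (h0 : EGood (N := N) (K := K) U (D0 N K β h q)) (j : ℕ) (hj : j ≤ K) :
    ∀ t ∈ U, ∀ Jc Js, HasDerivAt (fun s => Wrec N K β h s q m j Jc Js)
      (Wrec N K β h t q m j Jc Js * Drec N K β h q m j t Jc Js) t := by
  induction j with
  | zero => exact fun t ht Jc Js => Ztil_hasDerivAt hN β h q (hU ht) Jc Js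
  | succ j ih =>
    intro t ht Jc Js
    have ih := ih (by omega)
    have hj' : j < K := hj
    have hmp : 0 < m (K - j) := hm _ (by omega) (by omega)
    have hW := Wrec_EPos (N := N) (K := K) (β := β) (h := h) (q := q) (m := m) hU j hj'.le
    have hD := Drec_EGood (N := N) (K := K) (β := β) (h := h) (q := q) (m := m) hU h0 j hj'.le
    have hWm := hW.rpow (m (K - j))
    have hG := (EGood.const (N := N) (K := K) (U := U) (m (K - j))).mul (hWm.good.mul hD)
    set r : Fin K := ⟨K - 1 - j, by omega⟩ with hr
    have hd : ∀ t ∈ U, ∀ Jc Js, HasDerivAt (fun s => Wrec N K β h s q m j Jc Js ^ m (K - j))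
        (m (K - j) * (Wrec N K β h t q m j Jc Js ^ m (K - j) * Drec N K β h q m j t Jc Js)) t := by
      intro t ht Jc Js
      have hp := hW.pos ht Jc Js
      have h1 := (ih t ht Jc Js).rpow_const (p := m (K - j)) (Or.inl hp.ne')
      convert h1 using 1
      rw [Real.rpow_sub_one hp.ne']
      field_simp
    have hI := hWm.good.hasDerivAt_avg hUo hG hd r ht Jc Js
    have hIp := (hWm.avg r).pos ht Jc Js
    have hfin := hI.rpow_const (p := (m (K - j))⁻¹) (Or.inl hIp.ne')
    simp only [Wrec_succ hj', ← hr]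
    convert hfin using 1
    rw [Drec_succ hj']
    simp only [← hr]
    set I := ∫ g, Wrec N K β h t q m j Jc (Function.update Js r g) ^ m (K - j) ∂gaussN N with hIdef
    have hf : ∀ g, fWeight N K β h t q m (K - j) Jc (Function.update Js r g)
        = Wrec N K β h t q m j Jc (Function.update Js r g) ^ m (K - j) / I := by
      intro g
      rw [fWeight_eq hj', Wrec_succ hj', ← hr]
      simp only [Function.update_idem, ← hIdef]
      rw [Real.rpow_inv_rpow hIp.le hmp.ne']
    simp only [hf]
    rw [integral_const_mul, Real.rpow_sub_one hIp.ne']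
    have : ∀ g, Wrec N K β h t q m j Jc (Function.update Js r g) ^ m (K - j) / I *
        Drec N K β h q m j t Jc (Function.update Js r g) =
        I⁻¹ * (Wrec N K β h t q m j Jc (Function.update Js r g) ^ m (K - j) *
        Drec N K β h q m j t Jc (Function.update Js r g)) := fun g => by ring
    simp only [this]
    rw [integral_const_mul]
    field_simp

theorem integral_step (hU : U ⊆ Set.Ioo 0 1)
    (h0 : EGood (N := N) (K := K) U (D0 N K β h q)) (j : ℕ) (hj : j < K) {t : ℝ} (ht : t ∈ U)
    (Jc : Fin N → Fin N → ℝ) :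
    ∫ Js, (∏ a ∈ Finset.Icc 1 (K - j), fWeight N K β h t q m a Jc Js) *
        Drec N K β h q m j t Jc Js ∂gaussS K N =
    ∫ Js, (∏ a ∈ Finset.Icc 1 (K - (j + 1)), fWeight N K β h t q m a Jc Js) *
        Drec N K β h q m (j + 1) t Jc Js ∂gaussS K N := by
  have hf : ∀ a ∈ Finset.Icc 1 (K - j),
      EGood (N := N) (K := K) U (fun t Jc Js => fWeight N K β h t q m a Jc Js) := by
    intro a ha
    rw [Finset.mem_Icc] at ha
    have := fWeight_EGood (N := N) (K := K) (β := β) (h := h) (q := q) (m := m) hU (K - a)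
      (by omega)
    rwa [show K - (K - a) = a by omega] at this
  have hG := (EGood.prod _ hf).mul
    (Drec_EGood (N := N) (K := K) (β := β) (h := h) (q := q) (m := m) hU h0 j hj.le)
  rw [hG.integral_s ht Jc ⟨K - 1 - j, by omega⟩]
  refine integral_congr_ae (ae_of_all _ fun Js => ?_)
  dsimp only
  rw [Drec_succ hj, ← integral_const_mul]
  refine integral_congr_ae (ae_of_all _ fun g => ?_)
  dsimp only
  have hs : K - j = (K - (j + 1)) + 1 := by omega
  have hprod : ∏ a ∈ Finset.Icc 1 (K - j), fWeight N K β h t q m a Jc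
        (Function.update Js ⟨K - 1 - j, by omega⟩ g)
      = (∏ a ∈ Finset.Icc 1 (K - (j + 1)), fWeight N K β h t q m a Jc Js) *
        fWeight N K β h t q m (K - j) Jc (Function.update Js ⟨K - 1 - j, by omega⟩ g) := by
    rw [hs, Finset.prod_Icc_succ_top (by omega)]
    congr 1
    refine Finset.prod_congr rfl fun a ha => ?_
    rw [Finset.mem_Icc] at ha
    have := fWeight_dep (N := N) (K := K) (β := β) (h := h) (q := q) (m := m) t (K - a)
      (by omega) Jc (Function.update Js ⟨K - 1 - j, by omega⟩ g) Js (fun r hr => by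
        rw [Function.update_of_ne]
        intro e
        rw [e] at hr
        simp only at hr
        omega)
    rwa [show K - (K - a) = a by omega] at this
  rw [hprod, mul_assoc]

theorem integral_all (hU : U ⊆ Set.Ioo 0 1)
    (h0 : EGood (N := N) (K := K) U (D0 N K β h q)) {t : ℝ} (ht : t ∈ U)
    (Jc : Fin N → Fin N → ℝ) :
    ∫ Js, (∏ a ∈ Finset.Icc 1 K, fWeight N K β h t q m a Jc Js) *
        D0 N K β h q t Jc Js ∂gaussS K N = Drec N K β h q m K t Jc 0 := by
  have key : ∀ j, j ≤ K → ∫ Js, (∏ a ∈ Finset.Icc 1 K, fWeight N K β h t q m a Jc Js) *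
        D0 N K β h q t Jc Js ∂gaussS K N =
      ∫ Js, (∏ a ∈ Finset.Icc 1 (K - j), fWeight N K β h t q m a Jc Js) *
        Drec N K β h q m j t Jc Js ∂gaussS K N := by
    intro j
    induction j with
    | zero => intro _; rfl
    | succ j ih => intro hj; rw [ih (by omega), integral_step hU h0 j hj ht Jc]
  rw [key K le_rfl]
  have : ∀ Js, Drec N K β h q m K t Jc Js = Drec N K β h q m K t Jc 0 := fun Js =>
    Drec_dep t K le_rfl Jc Js 0 (fun r hr => by omega)
  simp only [this]
  simp

end recursion

/-- for `t ∈ (0,1)`, the interpolating free energy is differentiable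
in `t` with
`d/dt α̃_N(t) = N⁻¹ E(f_1 ⋯ f_K · Z̃_N⁻¹ ∂_t Z̃_N)`, where
`Z̃_N⁻¹ ∂_t Z̃_N = (β/(2√(tN))) ∑_{i<j} J_{ij} ω(σ_i σ_j)
  − (β/(2√(1−t))) ∑_a √(q_a − q_{a−1}) ∑_i J_i^a ω(σ_i)`. -/
theorem atilde_hasDerivAt (N : ℕ) (hN : 1 ≤ N) (X : OrderParam)
    (hm : ∀ a, 1 ≤ a → a ≤ X.K → 0 < X.m a) (β h : ℝ) (hβ : 0 ≤ β)
    (t : ℝ) (ht : t ∈ Set.Ioo (0 : ℝ) 1) :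
    HasDerivAt (atilde N X.K β h X.q X.m)
      ((N : ℝ)⁻¹ * ∫ Jc, ∫ Js,
          (∏ a ∈ Finset.Icc 1 X.K, fWeight N X.K β h t X.q X.m a Jc Js) *
            (β / (2 * Real.sqrt (t * N)) *
                ∑ i, ∑ j, (if i < j then
                  Jc i j * gibbs N X.K β h t X.q (fun σ => spin (σ i) * spin (σ j)) Jc Js
                  else 0)
              - β / (2 * Real.sqrt (1 - t)) *
                  ∑ a : Fin X.K, Real.sqrt (X.q (a.val + 1) - X.q a.val) *
                    ∑ i, Js a i * gibbs N X.K β h t X.q (fun σ => spin (σ i)) Jc Js)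
        ∂gaussS X.K N ∂gaussC N) t := by
  have ht0 := ht.1
  have ht1 := ht.2
  obtain ⟨δ, hδ, hδ1, hδ2⟩ : ∃ δ : ℝ, 0 < δ ∧ δ < t ∧ t < 1 - δ := by
    refine ⟨min t (1 - t) / 2, ?_, ?_, ?_⟩
    · have : 0 < min t (1 - t) := lt_min ht0 (by linarith)
      linarith
    · have := min_le_left t (1 - t)
      linarith
    · have := min_le_right t (1 - t)
      linarith
  have hU : Set.Ioo δ (1 - δ) ⊆ Set.Ioo (0 : ℝ) 1 := fun x hx =>
    ⟨hδ.trans hx.1, by linarith [hx.2]⟩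
  have htU : t ∈ Set.Ioo δ (1 - δ) := ⟨hδ1, hδ2⟩
  have h0 : EGood (N := N) (K := X.K) (Set.Ioo δ (1 - δ)) (D0 N X.K β h X.q) :=
    D0_EGood hN β h X.q hδ
  have hW := Wrec_EPos (N := N) (K := X.K) (β := β) (h := h) (q := X.q) (m := X.m) hU X.K le_rfl
  have hD := Drec_EGood (N := N) (K := X.K) (β := β) (h := h) (q := X.q) (m := X.m) hU h0 X.K le_rfl
  have hd := Wrec_hasDerivAt (β := β) (h := h) (q := X.q) hN hm isOpen_Ioo hU h0 X.K le_rfl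
  have hlog : ∀ t ∈ Set.Ioo δ (1 - δ), ∀ Jc Js,
      HasDerivAt (fun s => Real.log (Wrec N X.K β h s X.q X.m X.K Jc Js))
        (Drec N X.K β h X.q X.m X.K t Jc Js) t := by
    intro t ht Jc Js
    have hp := (hW.pos ht Jc Js).ne'
    have := (hd t ht Jc Js).log hp
    rwa [mul_div_cancel_left₀ _ hp] at this
  have hmain := (hW.log.hasDerivAt_c isOpen_Ioo hD hlog htU 0).const_mul ((N : ℝ)⁻¹)
  have hall := fun Jc => integral_all (m := X.m) hU h0 htU Jc
  unfold D0 at hall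
  simp only [hall]
  exact hmain

end
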